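/- arXiv:1501.00079 — 2 statements merged into one kernel-verified Lean document; each statement's English description precedes it below -/
import Mathlib

section
/- Let G be a connected simple graph with n > 3 vertices and m edges. If the complement of G is 4-connected, then mc(G) = m − n + 2. -/
open SimpleGraph Filter Real

/-- An edge-coloring `c` (colors on vertex pairs, only the values on edges matter)
of `G` is a monochromatic connection coloring (MC-coloring) if every two vertices
are joined by a path all of whose edges receive the same color. -/
def IsMCColoring {V : Type*} (G : SimpleGraph V) (c : Sym2 V → ℕ) : Prop :=
  ∀ u v : V, ∃ p : G.Walk u v, p.IsPath ∧ ∃ k : ℕ, ∀ e ∈ p.edges, c e = k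

/-- `mcNum G` is the maximum number of colors (counted on the edges of `G`)
used in an MC-coloring of `G`; it is `0` if `G` admits no MC-coloring
(in particular if `G` is disconnected). -/
noncomputable def mcNum {V : Type*} (G : SimpleGraph V) : ℕ :=
  sSup {k | ∃ c : Sym2 V → ℕ, IsMCColoring G c ∧ (Set.image c G.edgeSet).ncard = k}

/-- A graph is `k`-connected if it has more than `k` vertices and deleting any
set of fewer than `k` vertices leaves it connected. -/
def IsKConnected {V : Type*} [Fintype V] (G : SimpleGraph V) (k : ℕ) : Prop :=
  k < Fintype.card V ∧
    ∀ S : Finset V, S.card < k → (G.induce ((S : Set V)ᶜ)).Connected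

section Helpers

open Classical in
/-- A graph has at least `n - c` edges, where `c` counts the components. -/
theorem card_le_edges_add_components {V : Type*} [Fintype V] (A : SimpleGraph V) :
    Fintype.card V ≤ A.edgeFinset.card + Fintype.card A.ConnectedComponent := by
  let r : V → V := fun v => (A.connectedComponentMk v).out
  have hr : ∀ v, A.Reachable v (r v) := fun v =>
    (ConnectedComponent.exact (Quot.out_eq (A.connectedComponentMk v))).symm
  have hstep : ∀ v, v ≠ r v → ∃ w, A.Adj v w ∧ A.dist w (r v) < A.dist v (r v) := by
    intro v hv
    obtain ⟨p, hp⟩ := (hr v).exists_walk_length_eq_dist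
    generalize r v = x at *
    cases p with
    | nil => exact absurd rfl hv
    | @cons _ w _ h q =>
      refine ⟨w, h, ?_⟩
      have := A.dist_le q
      simp at hp
      omega
  choose! f hf1 hf2 using hstep
  have hrf : ∀ v, v ≠ r v → r (f v) = r v := by
    intro v hv
    have : A.connectedComponentMk (f v) = A.connectedComponentMk v :=
      ConnectedComponent.sound (hf1 v hv).symm.reachable
    simp only [r, this]
  have h1 : (Finset.univ.filter fun v => v ≠ r v).card ≤ A.edgeFinset.card := by
    apply Finset.card_le_card_of_injOn (fun v => s(v, f v))
    · intro v hv
      simp only [Finset.coe_filter, Finset.mem_univ, true_and, Set.mem_ofPred_eq] at hv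
      simpa using hf1 v hv
    · intro v hv v' hv' he
      simp only [Finset.coe_filter, Finset.mem_univ, true_and, Set.mem_ofPred_eq] at hv hv'
      simp only [Sym2.eq_iff] at he
      rcases he with he | he
      · exact he.1
      · exfalso
        have a1 := hf2 v hv
        have a2 := hf2 v' hv'
        have a3 := hrf v hv
        rw [he.2] at a1 a3
        rw [← he.1, a3] at a2
        omega
  have h2 : (Finset.univ.filter fun v => ¬ v ≠ r v).card ≤ Fintype.card A.ConnectedComponent := by
    apply Finset.card_le_card_of_injOn (fun v => A.connectedComponentMk v)
    · intro v hv
      simp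
    · intro v hv v' hv' he
      simp only [Finset.coe_filter, Finset.mem_univ, true_and, Set.mem_ofPred_eq, not_not] at hv hv'
      rw [hv, hv']
      simp only [r]
      simp only at he
      rw [he]
  have h3 := Finset.card_filter_add_card_filter_not (s := (Finset.univ : Finset V))
    (fun v => v ≠ r v)
  rw [Finset.card_univ] at h3
  omega

/-- Two distinct reachable vertices: the first one has a neighbour. -/
theorem exists_adj_of_reachable_ne {V : Type*} {A : SimpleGraph V} {u v : V}
    (h : A.Reachable u v) (hne : u ≠ v) : ∃ w, A.Adj u w := by
  obtain ⟨p⟩ := h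
  cases p with
  | nil => exact absurd rfl hne
  | @cons _ w _ h q => exact ⟨w, h⟩

/-- A nonempty vertex set, closed under adjacency in a connected graph, is everything. -/
theorem closed_eq_univ {V : Type*} {A : SimpleGraph V} (hA : A.Connected) (P : V → Prop)
    (hP : ∀ u v, A.Adj u v → P u → P v) (u : V) (hu : P u) (v : V) : P v := by
  obtain ⟨p⟩ := hA.preconnected u v
  induction p with
  | nil => exact hu
  | cons h q ih => exact ih (hP _ _ h hu)

open Classical in
/-- The weight a component hands out. -/
theorem component_weight {V : Type*} [Fintype V] (H A : SimpleGraph V)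
    (hAH : ∀ u v, A.Adj u v → ¬ H.Adj u v) (hH : IsKConnected H 4) (hA : ¬ A.Connected)
    (D : V → Prop)
    (hD : ∀ v, (∃ u, H.Adj v u ∧ A.Reachable v u) → ¬ D v → ∀ u, H.Adj v u → A.Reachable v u)
    (C : Finset V) (hC1 : ∀ u ∈ C, ∀ v, v ∈ C ↔ A.Reachable u v) (hC0 : C.Nonempty) :
    (∑ v ∈ C, if (∃ u, H.Adj v u ∧ A.Reachable v u) then (if D v then 1 else 2) else 0) + 2
      ≤ 2 * C.card ∧ (2 ≤ C.card →
    (∑ v ∈ C, if (∃ u, H.Adj v u ∧ A.Reachable v u) then (if D v then 1 else 2) else 0) + 4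
      ≤ 2 * C.card) := by
  set act : V → Prop := fun v => ∃ u, H.Adj v u ∧ A.Reachable v u with hact
  change (∑ v ∈ C, if act v then (if D v then 1 else 2) else 0) + 2
      ≤ 2 * C.card ∧ (2 ≤ C.card →
    (∑ v ∈ C, if act v then (if D v then 1 else 2) else 0) + 4 ≤ 2 * C.card)
  set B := C.filter (fun v => act v ∧ D v) with hB
  set N := C.filter (fun v => act v ∧ ¬ D v) with hN
  have hsum : (∑ v ∈ C, if act v then (if D v then 1 else 2) else 0) = B.card + 2 * N.card := by
    rw [hB, hN, Finset.card_filter, Finset.card_filter, Finset.mul_sum, ← Finset.sum_add_distrib]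
    apply Finset.sum_congr rfl
    intro v _
    by_cases h1 : act v <;> by_cases h2 : D v <;> simp [h1, h2]
  rw [hsum]
  have hdisj : Disjoint B N := by
    rw [Finset.disjoint_left]
    intro v h1 h2
    simp only [hB, hN, Finset.mem_filter] at h1 h2
    exact h2.2.2 h1.2.2
  have hle : B.card + N.card ≤ C.card := by
    rw [← Finset.card_union_of_disjoint hdisj]
    apply Finset.card_le_card
    intro v hv
    simp only [hB, hN, Finset.mem_union, Finset.mem_filter] at hv
    tauto
  have hpos : 0 < C.card := hC0.card_pos
  -- active vertices have two further vertices in `C`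
  have hthree : ∀ v ∈ C, act v → ∃ u ∈ C, ∃ w ∈ C, u ≠ w ∧ v ≠ u ∧ v ≠ w ∧
      H.Adj v u ∧ A.Adj v w := by
    rintro v hv ⟨u, hu1, hu2⟩
    obtain ⟨w, hw⟩ := exists_adj_of_reachable_ne hu2 hu1.ne
    refine ⟨u, (hC1 v hv u).2 hu2, w, (hC1 v hv w).2 hw.reachable, ?_, hu1.ne, hw.ne, hu1, hw⟩
    rintro rfl
    exact hAH _ _ hw hu1
  by_cases hemp : ∃ v ∈ C, act v
  swap
  · have hB0 : B.card = 0 := by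
      rw [Finset.card_eq_zero, hB, Finset.filter_eq_empty_iff]
      intro v hv h
      exact hemp ⟨v, hv, h.1⟩
    have hN0 : N.card = 0 := by
      rw [Finset.card_eq_zero, hN, Finset.filter_eq_empty_iff]
      intro v hv h
      exact hemp ⟨v, hv, h.1⟩
    omega
  have hC3 : 3 ≤ C.card := by
    obtain ⟨v, hv, hva⟩ := hemp
    obtain ⟨u, hu, w, hw, h1, h2, h3, -⟩ := hthree v hv hva
    rw [← Finset.card_eq_three.2 ⟨v, u, w, h2, h3, h1, rfl⟩]
    apply Finset.card_le_card
    intro x hx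
    simp only [Finset.mem_insert, Finset.mem_singleton] at hx
    rcases hx with rfl | rfl | rfl <;> assumption
  suffices hmain : B.card + 2 * N.card + 4 ≤ 2 * C.card from ⟨by omega, fun _ => hmain⟩
  by_cases hB4 : 4 ≤ B.card
  · omega
  have hN0 : N.card = 0 := by
    by_contra hne
    obtain ⟨x, hx⟩ := Finset.card_pos.1 (Nat.pos_of_ne_zero hne)
    have hconn := hH.2 B (by omega)
    have hxB : x ∉ B := fun h => Finset.disjoint_left.1 hdisj h hx
    have hall := closed_eq_univ hconn (fun v => (v : V) ∈ N) (by
      rintro ⟨a, ha⟩ ⟨b, hb⟩ hab haN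
      simp only [comap_adj, Function.Embedding.subtype_apply] at hab
      simp only at haN ⊢
      simp only [hN, Finset.mem_filter] at haN
      have hr := hD a haN.2.1 haN.2.2 b hab
      have hbC := (hC1 a haN.1 b).2 hr
      have hba : act b := ⟨a, hab.symm, hr.symm⟩
      have hb' : b ∉ B := by simpa using hb
      simp only [hB, hN, Finset.mem_filter] at hb' ⊢
      exact ⟨hbC, hba, fun h => hb' ⟨hbC, hba, h⟩⟩) ⟨x, by simpa using hxB⟩ hx
    have hCall : ∀ v, v ∈ C := by
      intro v
      by_cases hv : v ∈ B
      · exact (Finset.mem_filter.1 hv).1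
      · exact (Finset.mem_filter.1 (hall ⟨v, by simpa using hv⟩)).1
    apply hA
    have : Nonempty V := ⟨x⟩
    exact ⟨fun u v => (hC1 u (hCall u) v).1 (hCall v)⟩
  by_contra hcon
  have hcard : C.card = 3 := by omega
  have hBC : B = C := Finset.eq_of_subset_of_card_le (Finset.filter_subset _ _) (by omega)
  have hallact : ∀ v ∈ C, act v := by
    intro v hv
    rw [← hBC] at hv
    exact (Finset.mem_filter.1 hv).2.1
  obtain ⟨v, hv⟩ := hC0
  obtain ⟨u, hu, w, hw, h1, h2, h3, huv, hvw⟩ := hthree v hv (hallact v hv)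
  have hCeq : ({v, u, w} : Finset V) = C := by
    apply Finset.eq_of_subset_of_card_le
    · intro x hx
      simp only [Finset.mem_insert, Finset.mem_singleton] at hx
      rcases hx with rfl | rfl | rfl <;> assumption
    · rw [Finset.card_eq_three.2 ⟨v, u, w, h2, h3, h1, rfl⟩, hcard]
  -- `w` has an `H`-neighbour, which must be `u`
  obtain ⟨y, hy, -, -, -, -, -, hwy, -⟩ := hthree w hw (hallact w hw)
  have hwu : H.Adj w u := by
    rw [← hCeq] at hy
    simp only [Finset.mem_insert, Finset.mem_singleton] at hy
    rcases hy with rfl | rfl | rfl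
    · exact absurd hwy.symm (hAH _ _ hvw)
    · exact hwy
    · exact absurd rfl hwy.ne
  obtain ⟨-, -, z, hz, -, -, -, -, huz⟩ := hthree u hu (hallact u hu)
  rw [← hCeq] at hz
  simp only [Finset.mem_insert, Finset.mem_singleton] at hz
  rcases hz with rfl | rfl | rfl
  · exact hAH _ _ huz huv.symm
  · exact absurd rfl huz.ne
  · exact hAH _ _ huz hwu.symm

open Classical in
/-- The weight a color hands out. -/
theorem color_weight {V : Type*} [Fintype V] (H A : SimpleGraph V)
    (hAH : ∀ u v, A.Adj u v → ¬ H.Adj u v) (hH : IsKConnected H 4) (hA : ¬ A.Connected)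
    (D : V → Prop)
    (hD : ∀ v, (∃ u, H.Adj v u ∧ A.Reachable v u) → ¬ D v → ∀ u, H.Adj v u → A.Reachable v u)
    (hE : ∃ u v, A.Adj u v) :
    (∑ v, if (∃ u, H.Adj v u ∧ A.Reachable v u) then (if D v then 1 else 2) else 0) + 2
      ≤ 2 * A.edgeFinset.card := by
  set g : V → ℕ :=
    fun v => if (∃ u, H.Adj v u ∧ A.Reachable v u) then (if D v then 1 else 2) else 0 with hg
  let F : A.ConnectedComponent → Finset V :=
    fun C => Finset.univ.filter fun v => A.connectedComponentMk v = C
  have hkey := fun C : A.ConnectedComponent => component_weight H A hAH hH hA D hD (F C) (by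
    intro u hu v
    simp only [F, Finset.mem_filter, Finset.mem_univ, true_and] at hu ⊢
    rw [← hu, ConnectedComponent.eq]
    exact ⟨fun h => h.symm, fun h => h.symm⟩) (by
    obtain ⟨v, hv⟩ := C.exists_rep
    exact ⟨v, Finset.mem_filter.2 ⟨Finset.mem_univ _, hv⟩⟩)
  obtain ⟨a, b, hab⟩ := hE
  set C0 := A.connectedComponentMk a with hC0
  have h2 : 2 ≤ (F C0).card := by
    rw [← Finset.card_pair hab.ne]
    apply Finset.card_le_card
    intro x hx
    simp only [Finset.mem_insert, Finset.mem_singleton] at hx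
    simp only [F, Finset.mem_filter, Finset.mem_univ, true_and]
    rcases hx with rfl | rfl
    · rfl
    · exact ConnectedComponent.sound hab.symm.reachable
  have hsum : ∑ C : A.ConnectedComponent, ((∑ v ∈ F C, g v) + 2 + if C = C0 then 2 else 0)
      ≤ ∑ C : A.ConnectedComponent, 2 * (F C).card := by
    apply Finset.sum_le_sum
    intro C _
    by_cases h : C = C0
    · subst h
      have := (hkey C0).2 h2
      simp only [if_true]
      exact this
    · have := (hkey C).1
      simp only [h, if_false]
      exact this
  rw [Finset.sum_add_distrib, Finset.sum_add_distrib, ← Finset.mul_sum] at hsum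
  have e1 : ∑ C : A.ConnectedComponent, ∑ v ∈ F C, g v = ∑ v, g v :=
    Finset.sum_fiberwise _ _ _
  have e2 : ∑ C : A.ConnectedComponent, (F C).card = Fintype.card V := by
    have := Finset.sum_fiberwise (Finset.univ : Finset V) A.connectedComponentMk (fun _ => 1)
    simp only [Finset.sum_const, smul_eq_mul, mul_one, Finset.card_univ] at this
    exact this
  rw [e1, e2] at hsum
  simp only [Finset.sum_const, smul_eq_mul, Finset.card_univ, Finset.sum_ite_eq', Finset.mem_univ,
    if_true] at hsum
  have := card_le_edges_add_components A
  have hfin : (∑ v, g v) + 2 ≤ 2 * A.edgeFinset.card := by omega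
  exact hfin

/-- The graph of edges of color `k`. -/
def colorGraph {V : Type*} (G : SimpleGraph V) (c : Sym2 V → ℕ) (k : ℕ) : SimpleGraph V where
  Adj u v := G.Adj u v ∧ c s(u, v) = k
  symm := ⟨fun u v h => ⟨h.1.symm, by rw [Sym2.eq_swap]; exact h.2⟩⟩
  loopless := ⟨fun u h => G.loopless.irrefl u h.1⟩

theorem reachable_colorGraph {V : Type*} {G : SimpleGraph V} {c : Sym2 V → ℕ} {k : ℕ} {u v : V}
    (p : G.Walk u v) (hp : ∀ e ∈ p.edges, c e = k) : (colorGraph G c k).Reachable u v := by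
  induction p with
  | nil => exact Reachable.refl _
  | cons h q ih =>
    simp only [Walk.edges_cons, List.mem_cons, forall_eq_or_imp] at hp
    exact (Adj.reachable (G := colorGraph G c k) ⟨h, hp.1⟩).trans (ih hp.2)

open Classical in
/-- The upper bound. -/
theorem mc_upper {V : Type*} [Fintype V] (G : SimpleGraph V) (hn : 3 < Fintype.card V)
    (hc : IsKConnected Gᶜ 4) (c : Sym2 V → ℕ) (hcol : IsMCColoring G c) :
    (G.edgeFinset.image c).card + Fintype.card V ≤ G.edgeFinset.card + 2 := by
  set K := G.edgeFinset.image c with hK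
  have hm : G.edgeFinset.card = ∑ k ∈ K, (colorGraph G c k).edgeFinset.card := by
    rw [Finset.card_eq_sum_card_fiberwise (f := c) (t := K)
      (fun e he => Finset.mem_coe.2 (Finset.mem_image_of_mem c he))]
    apply Finset.sum_congr rfl
    intro k _
    congr 1
    ext e
    induction e with
    | _ u v =>
      rw [Finset.mem_filter, mem_edgeFinset, mem_edgeFinset, mem_edgeSet, mem_edgeSet]
      rfl
  have hKE : ∀ k ∈ K, ∃ u v, (colorGraph G c k).Adj u v := by
    intro k hk
    obtain ⟨e, he, hek⟩ := Finset.mem_image.1 hk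
    induction e with
    | _ u v => exact ⟨u, v, by simpa using he, hek⟩
  have hEK : ∀ k u v, (colorGraph G c k).Adj u v → k ∈ K := by
    intro k u v h
    exact Finset.mem_image.2 ⟨s(u, v), by simpa using h.1, h.2⟩
  have hpos : ∀ k ∈ K, 1 ≤ (colorGraph G c k).edgeFinset.card := by
    intro k hk
    obtain ⟨u, v, h⟩ := hKE k hk
    exact Finset.card_pos.2 ⟨s(u, v), by simpa using h⟩
  by_cases hconn : ∃ k, (colorGraph G c k).Connected
  · obtain ⟨k, hk⟩ := hconn
    have h1 := hk.card_vert_le_card_edgeSet_add_one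
    rw [Nat.card_eq_fintype_card, Nat.card_eq_fintype_card, ← edgeFinset_card] at h1
    have hkK : k ∈ K := by
      have : 0 < (colorGraph G c k).edgeFinset.card := by omega
      obtain ⟨e, he⟩ := Finset.card_pos.1 this
      induction e with
      | _ u v => exact hEK k u v (by simpa using he)
    have h2 : ∑ j ∈ K.erase k, 1 ≤ ∑ j ∈ K.erase k, (colorGraph G c j).edgeFinset.card :=
      Finset.sum_le_sum fun j hj => hpos j (Finset.mem_of_mem_erase hj)
    rw [← Finset.add_sum_erase _ _ hkK] at hm
    have h3 := Finset.card_erase_add_one hkK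
    simp only [Finset.sum_const, smul_eq_mul, mul_one] at h2
    omega
  push Not at hconn
  let act : ℕ → V → Prop := fun k v => ∃ u, Gᶜ.Adj v u ∧ (colorGraph G c k).Reachable v u
  have hactK : ∀ k v, act k v → k ∈ K := by
    rintro k v ⟨u, h1, h2⟩
    obtain ⟨w, hw⟩ := exists_adj_of_reachable_ne h2 h1.ne
    exact hEK _ _ _ hw
  have hcov : ∀ v u, Gᶜ.Adj v u → ∃ k, (colorGraph G c k).Reachable v u := by
    intro v u _
    obtain ⟨p, -, k, hk⟩ := hcol v u
    exact ⟨k, reachable_colorGraph p hk⟩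
  let D : V → Prop := fun v => ∃ k l, k ≠ l ∧ act k v ∧ act l v
  have hw : ∀ k ∈ K, (∑ v, if act k v then (if D v then 1 else 2) else 0) + 2
      ≤ 2 * (colorGraph G c k).edgeFinset.card := by
    intro k hk
    have := color_weight Gᶜ (colorGraph G c k) ?_ hc (hconn k) D ?_ (hKE k hk)
    · convert this
    · intro u v h h'
      exact h'.2 h.1
    · intro v hv hDv u hu
      obtain ⟨l, hl⟩ := hcov v u hu
      by_cases hkl : k = l
      · rw [hkl]; exact hl
      · exact absurd ⟨k, l, hkl, hv, u, hu, hl⟩ hDv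
  have hv : ∀ v, 2 ≤ ∑ k ∈ K, if act k v then (if D v then 1 else 2) else 0 := by
    intro v
    have hnb : ∃ u, Gᶜ.Adj v u := by
      have h0 := hc.2 ∅ (by simp)
      obtain ⟨u, hu⟩ := Fintype.exists_ne_of_one_lt_card (by omega) v
      obtain ⟨w, hw⟩ := exists_adj_of_reachable_ne
        (h0.preconnected ⟨v, by simp⟩ ⟨u, by simp⟩) (by simpa using hu.symm)
      exact ⟨w, hw⟩
    by_cases hDv : D v
    · obtain ⟨k, l, hkl, hk, hl⟩ := id hDv
      have : ∑ j ∈ ({k, l} : Finset ℕ), (if act j v then (if D v then 1 else 2) else 0) ≤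
          ∑ j ∈ K, if act j v then (if D v then 1 else 2) else 0 := by
        apply Finset.sum_le_sum_of_subset
        intro j hj
        simp only [Finset.mem_insert, Finset.mem_singleton] at hj
        rcases hj with rfl | rfl
        · exact hactK _ _ hk
        · exact hactK _ _ hl
      rw [Finset.sum_pair hkl] at this
      simpa [hk, hl, hDv] using this
    · obtain ⟨u, hu⟩ := hnb
      obtain ⟨k, hk⟩ := hcov v u hu
      have hak : act k v := ⟨u, hu, hk⟩
      have := Finset.single_le_sum (f := fun k => if act k v then (if D v then 1 else 2) else 0)
        (fun _ _ => Nat.zero_le _) (hactK _ _ hak)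
      simpa [hak, hDv] using this
  have s1 : ∑ v : V, 2 ≤ ∑ v : V, ∑ k ∈ K, if act k v then (if D v then 1 else 2) else 0 :=
    Finset.sum_le_sum fun v _ => hv v
  rw [Finset.sum_comm] at s1
  have s2 := Finset.sum_le_sum hw
  rw [Finset.sum_add_distrib, ← Finset.mul_sum, ← hm] at s2
  simp only [Finset.sum_const, smul_eq_mul, Finset.card_univ] at s1 s2
  omega

open Classical in
/-- The lower bound. -/
theorem mc_lower {V : Type*} [Fintype V] (G : SimpleGraph V) (hG : G.Connected)
    (hn : 3 < Fintype.card V) :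
    ∃ c : Sym2 V → ℕ, IsMCColoring G c ∧
      (G.edgeFinset.image c).card + Fintype.card V = G.edgeFinset.card + 2 := by
  obtain ⟨T, hTG, hT⟩ := hG.exists_isTree_le
  let φ := Fintype.equivFin (Sym2 V)
  let c : Sym2 V → ℕ := fun e => if e ∈ T.edgeFinset then 0 else (φ e : ℕ) + 1
  refine ⟨c, ?_, ?_⟩
  · intro u v
    obtain ⟨p, hp⟩ := (hT.connected.preconnected u v).exists_isPath
    refine ⟨p.mapLe hTG, (Walk.isPath_mapLe hTG).2 hp, 0, ?_⟩
    intro e he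
    rw [Walk.edges_mapLe_eq_edges] at he
    have := p.edges_subset_edgeSet he
    simp [c, this]
  · have hcard := hT.card_edgeFinset
    have hsub : T.edgeFinset ⊆ G.edgeFinset := edgeFinset_mono hTG
    have hne : T.edgeFinset.Nonempty := Finset.card_pos.1 (by omega)
    have himg : G.edgeFinset.image c =
        insert 0 ((G.edgeFinset \ T.edgeFinset).image c) := by
      conv_lhs => rw [← Finset.sdiff_union_of_subset hsub]
      rw [Finset.image_union, Finset.union_comm, ← Finset.singleton_union]
      congr 1
      ext k
      simp only [Finset.mem_image, Finset.mem_singleton]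
      constructor
      · rintro ⟨e, he, rfl⟩
        simp only [c, he, if_true]
      · rintro rfl
        obtain ⟨e, he⟩ := hne
        exact ⟨e, he, by simp only [c, he, if_true]⟩
    rw [himg, Finset.card_insert_of_notMem, Finset.card_image_of_injOn,
      Finset.card_sdiff_of_subset hsub]
    · have := Finset.card_le_card hsub
      omega
    · intro e he e' he' h
      simp only [Finset.coe_sdiff, Set.mem_sdiff, Finset.mem_coe] at he he'
      simp only [c, he.2, he'.2, if_false] at h
      exact φ.injective (Fin.ext (by omega))
    · simp only [Finset.mem_image, not_exists, not_and]
      intro e he h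
      have := (Finset.mem_sdiff.1 he).2
      simp only [c, this, if_false] at h
      omega

end Helpers

/-- If `G` is a connected graph with `n > 3` vertices whose complement is
4-connected, then `mc(G) = m - n + 2`. -/
theorem mc_eq_of_compl_four_connected {V : Type*} [Fintype V] [DecidableEq V]
    (G : SimpleGraph V) [DecidableRel G.Adj] (hG : G.Connected)
    (hn : 3 < Fintype.card V) (hc : IsKConnected Gᶜ 4) :
    (mcNum G : ℤ) = (G.edgeFinset.card : ℤ) - (Fintype.card V : ℤ) + 2 := by
  have key : ∀ c : Sym2 V → ℕ, (Set.image c G.edgeSet).ncard = (G.edgeFinset.image c).card := by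
    intro c
    rw [← Set.ncard_coe_finset, Finset.coe_image, coe_edgeFinset]
  have hup : ∀ c : Sym2 V → ℕ, IsMCColoring G c →
      (G.edgeFinset.image c).card + Fintype.card V ≤ G.edgeFinset.card + 2 := by
    intro c hcol
    have := mc_upper G hn hc c hcol
    convert this
  obtain ⟨c, hc1, hc2⟩ := mc_lower G hG hn
  have hc2' : (G.edgeFinset.image c).card + Fintype.card V = G.edgeFinset.card + 2 := by
    convert hc2
  have hmc : mcNum G = (G.edgeFinset.image c).card := by
    apply IsGreatest.csSup_eq
    refine ⟨⟨c, hc1, key c⟩, ?_⟩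
    rintro k ⟨c', h1, rfl⟩
    rw [key]
    have := hup c' h1
    omega
  rw [hmc]
  omega
end

section
/- Let G be a connected simple graph with n > 3 vertices and m edges. If G has a cut vertex (a vertex whose deletion disconnects G), then mc(G) = m − n + 2. -/
open SimpleGraph Filter Real

lemma aux_cover {W : Type*} [Fintype W] [DecidableEq W] (K : Finset ℕ) (C : ℕ → Finset W)
    (J : SimpleGraph W) (hJ : J.Connected)
    (h : ∀ x y, J.Adj x y → ∃ k ∈ K, x ∈ C k ∧ y ∈ C k) :
    Fintype.card W ≤ (∑ k ∈ K, ((C k).card - 1)) + 1 := by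
  classical
  have hne := hJ.nonempty
  have hr : ∀ k, ∃ r : W, (C k).Nonempty → r ∈ C k := by
    intro k
    by_cases hk : (C k).Nonempty
    · obtain ⟨r, hr⟩ := hk
      exact ⟨r, fun _ => hr⟩
    · exact ⟨hne.some, fun h => absurd h hk⟩
  choose r hr using hr
  let S : Finset (Sym2 W) := K.biUnion fun k => ((C k).erase (r k)).image fun w => s(r k, w)
  let H : SimpleGraph W := SimpleGraph.fromEdgeSet (S : Set (Sym2 W))
  have hstar : ∀ k ∈ K, ∀ x ∈ C k, H.Reachable (r k) x := by
    intro k hk x hx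
    by_cases hxr : x = r k
    · rw [hxr]
    · apply SimpleGraph.Adj.reachable
      simp only [H, SimpleGraph.fromEdgeSet_adj]
      refine ⟨?_, fun h => hxr h.symm⟩
      simp only [S, Finset.coe_biUnion, Set.mem_iUnion, Finset.mem_coe, Finset.mem_image,
        Finset.mem_erase]
      exact ⟨k, hk, x, ⟨hxr, hx⟩, rfl⟩
  have hadj : ∀ x y, J.Adj x y → H.Reachable x y := by
    intro x y hxy
    obtain ⟨k, hk, hx, hy⟩ := h x y hxy
    exact (hstar k hk x hx).symm.trans (hstar k hk y hy)
  have hH : H.Connected := by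
    refine ⟨fun x y => ?_⟩
    obtain ⟨p⟩ := hJ.preconnected x y
    induction p with
    | nil => exact SimpleGraph.Reachable.refl _
    | cons e _ ih => exact (hadj _ _ e).trans ih
  have h1 := hH.card_vert_le_card_edgeSet_add_one
  rw [Nat.card_eq_fintype_card] at h1
  have h2 : Nat.card H.edgeSet ≤ S.card := by
    have : H.edgeSet ⊆ (S : Set (Sym2 W)) := by
      simp [H, SimpleGraph.edgeSet_fromEdgeSet]
    calc Nat.card H.edgeSet = H.edgeSet.ncard := rfl
      _ ≤ (S : Set (Sym2 W)).ncard := Set.ncard_le_ncard this (Finset.finite_toSet S)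
      _ = S.card := Set.ncard_coe_finset S
  have h3 : S.card ≤ ∑ k ∈ K, ((C k).card - 1) := by
    refine Finset.card_biUnion_le.trans (Finset.sum_le_sum fun k _ => ?_)
    refine Finset.card_image_le.trans ?_
    by_cases hk : (C k).Nonempty
    · rw [Finset.card_erase_of_mem (hr k hk)]
    · rw [Finset.not_nonempty_iff_eq_empty] at hk
      simp [hk]
  omega

open Classical in
lemma aux_comp {V : Type*} [Fintype V] (K : SimpleGraph V) (v : V) :
    ((Finset.univ : Finset ↥({v} : Set V)ᶜ).filter fun w => K.Reachable v w.1).card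
      ≤ K.edgeSet.ncard := by
  have h1 := (K.connectedComponentMk v).connected_toSimpleGraph.card_vert_le_card_edgeSet_add_one
  have h2 : Nat.card (K.connectedComponentMk v).toSimpleGraph.edgeSet ≤ Nat.card K.edgeSet :=
    Nat.card_le_card_of_injective _
      (SimpleGraph.Embedding.mapEdgeSet
        (SimpleGraph.Embedding.induce (G := K) (K.connectedComponentMk v).supp)).injective
  have h3 : ((Finset.univ : Finset ↥({v} : Set V)ᶜ).filter fun w => K.Reachable v w.1).card + 1
      ≤ Nat.card (K.connectedComponentMk v) := by
    have e1 : Nat.card (K.connectedComponentMk v)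
        = ((Finset.univ : Finset V).filter fun w => K.Reachable v w).card := by
      rw [← Set.ncard_coe_finset]
      change Set.ncard (K.connectedComponentMk v).supp = _
      congr 1
      ext w
      simp [SimpleGraph.ConnectedComponent.mem_supp_iff, SimpleGraph.reachable_comm]
    rw [e1, ← Finset.card_map (Function.Embedding.subtype _), Nat.succ_le_iff]
    apply Finset.card_lt_card
    rw [Finset.ssubset_iff_of_subset]
    · exact ⟨v, by simp, by simp⟩
    · intro x hx
      simp only [Finset.mem_map, Finset.mem_filter, Finset.mem_univ, true_and] at hx ⊢
      obtain ⟨a, ha, rfl⟩ := hx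
      exact ha
  have h4 : Nat.card K.edgeSet = K.edgeSet.ncard := rfl
  omega

lemma aux_upper {V : Type*} [Fintype V] [DecidableEq V]
    (G : SimpleGraph V) [DecidableRel G.Adj]
    (hn : 3 < Fintype.card V) (v : V) (hv : ¬ (G.induce ({v} : Set V)ᶜ).Connected)
    (c : Sym2 V → ℕ) (hc : IsMCColoring G c) :
    (Set.image c G.edgeSet).ncard + Fintype.card V ≤ G.edgeFinset.card + 2 := by
  classical
  have hW : Fintype.card ↥({v} : Set V)ᶜ + 1 = Fintype.card V := by
    rw [Fintype.card_compl_set]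
    simp
    omega
  have hne : Nonempty ↥({v} : Set V)ᶜ := by
    rw [← Fintype.card_pos_iff]; omega
  let Gk : ℕ → SimpleGraph V := fun k => SimpleGraph.fromEdgeSet {e ∈ G.edgeSet | c e = k}
  let K : Finset ℕ := G.edgeFinset.image c
  let C : ℕ → Finset ↥({v} : Set V)ᶜ := fun k =>
    Finset.univ.filter fun w => (Gk k).Reachable v w.1
  have hedge : ∀ k, (Gk k).edgeSet.ncard = (G.edgeFinset.filter fun e => c e = k).card := by
    intro k
    rw [← Set.ncard_coe_finset]
    congr 1
    ext e
    simp only [Gk, SimpleGraph.edgeSet_fromEdgeSet, Finset.coe_filter,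
      SimpleGraph.mem_edgeFinset, Set.mem_sdiff, Set.mem_ofPred_eq]
    constructor
    · exact fun h => h.1
    · exact fun h => ⟨h, fun hd => G.not_isDiag_of_mem_edgeSet h.1 hd⟩
  have key : ∀ a b : ↥({v} : Set V)ᶜ, ¬ (G.induce ({v} : Set V)ᶜ).Reachable a b →
      ∃ k ∈ K, a ∈ C k ∧ b ∈ C k := by
    intro a b hab
    obtain ⟨p, -, k, hk⟩ := hc a.1 b.1
    have hvp : v ∈ p.support := by
      by_contra hvp
      exact hab ⟨p.induce _ (fun x hx => by
        simp only [Set.mem_compl_iff, Set.mem_singleton_iff]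
        rintro rfl
        exact hvp hx)⟩
    have hr1 : (Gk k).Reachable a.1 v := by
      refine ⟨(p.takeUntil v hvp).transfer _ fun e he => ?_⟩
      have he' := p.edges_takeUntil_subset_edges hvp he
      have heG := p.edges_subset_edgeSet he'
      simp only [Gk, SimpleGraph.edgeSet_fromEdgeSet]
      exact ⟨⟨heG, hk e he'⟩, fun hd => G.not_isDiag_of_mem_edgeSet heG hd⟩
    have hr2 : (Gk k).Reachable v b.1 := by
      refine ⟨(p.dropUntil v hvp).transfer _ fun e he => ?_⟩
      have he' := p.edges_dropUntil_subset_edges hvp he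
      have heG := p.edges_subset_edgeSet he'
      simp only [Gk, SimpleGraph.edgeSet_fromEdgeSet]
      exact ⟨⟨heG, hk e he'⟩, fun hd => G.not_isDiag_of_mem_edgeSet heG hd⟩
    refine ⟨k, ?_, by simpa [C] using hr1.symm, by simpa [C] using hr2⟩
    have hav : a.1 ≠ b.1 := fun h => hab (by rw [Subtype.ext h])
    have hnil : p.edges ≠ [] := by
      intro h
      exact hav (SimpleGraph.Walk.edges_eq_nil.1 h).eq
    obtain ⟨e, he⟩ := List.exists_mem_of_ne_nil _ hnil
    simp only [K, Finset.mem_image, SimpleGraph.mem_edgeFinset]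
    exact ⟨e, p.edges_subset_edgeSet he, hk e he⟩
  have hnp : ¬ (G.induce ({v} : Set V)ᶜ).Preconnected := fun h => hv ⟨h⟩
  unfold SimpleGraph.Preconnected at hnp
  push Not at hnp
  obtain ⟨x, y, hxy⟩ := hnp
  let R := (G.induce ({v} : Set V)ᶜ)
  let J : SimpleGraph ↥({v} : Set V)ᶜ := SimpleGraph.fromRel fun a b => ¬ R.Reachable a b
  have hJadj : ∀ a b, ¬ R.Reachable a b → J.Adj a b := by
    intro a b hab
    simp only [J, SimpleGraph.fromRel_adj]
    exact ⟨fun h => hab (h ▸ SimpleGraph.Reachable.refl _), Or.inl hab⟩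
  have hJy : ∀ u, J.Reachable u y := by
    intro u
    by_cases hu : R.Reachable u y
    · have hux : ¬ R.Reachable u x := fun h => hxy (h.symm.trans hu)
      exact (hJadj _ _ hux).reachable.trans (hJadj _ _ hxy).reachable
    · exact (hJadj _ _ hu).reachable
  have hJ : J.Connected := ⟨fun a b => (hJy a).trans (hJy b).symm⟩
  have h1 := aux_cover K C J hJ (by
    intro a b hab
    simp only [J, SimpleGraph.fromRel_adj] at hab
    rcases hab.2 with h | h
    · exact key a b h
    · exact key a b fun h' => h h'.symm)
  have h2 : ∑ k ∈ K, ((C k).card - 1) + K.card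
      ≤ ∑ k ∈ K, (G.edgeFinset.filter fun e => c e = k).card := by
    rw [Finset.card_eq_sum_ones, ← Finset.sum_add_distrib]
    refine Finset.sum_le_sum fun k hk => ?_
    have ha : (C k).card ≤ (Gk k).edgeSet.ncard := by
      convert aux_comp (Gk k) v
    rw [hedge] at ha
    have hpos : 0 < (G.edgeFinset.filter fun e => c e = k).card := by
      rw [Finset.card_pos]
      obtain ⟨e, he, hek⟩ := Finset.mem_image.1 hk
      exact ⟨e, Finset.mem_filter.2 ⟨he, hek⟩⟩
    omega
  have h3 := Finset.card_eq_sum_card_image c G.edgeFinset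
  have h4 : (Set.image c G.edgeSet).ncard = K.card := by
    rw [← Set.ncard_coe_finset]
    simp [K]
  simp only [K] at *
  omega

lemma aux_lower {V : Type*} [Fintype V] [DecidableEq V]
    (G : SimpleGraph V) [DecidableRel G.Adj] (hG : G.Connected)
    (hn : 3 < Fintype.card V) :
    ∃ c : Sym2 V → ℕ, IsMCColoring G c ∧
      (Set.image c G.edgeSet).ncard + Fintype.card V = G.edgeFinset.card + 2 := by
  classical
  obtain ⟨T, hle, hT⟩ := hG.exists_isTree_le
  let f := Fintype.equivFin (Sym2 V)
  let c : Sym2 V → ℕ := fun e => if e ∈ T.edgeSet then 0 else (f e : ℕ) + 1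
  refine ⟨c, ?_, ?_⟩
  · intro u v
    obtain ⟨p, hp⟩ := hT.connected.exists_isPath u v
    refine ⟨p.mapLe hle, (SimpleGraph.Walk.mapLe_isPath hle).2 hp, 0, fun e he => ?_⟩
    rw [SimpleGraph.Walk.edges_mapLe_eq_edges] at he
    simp only [c, if_pos (p.edges_subset_edgeSet he)]
  · have hcard := hT.card_edgeFinset
    have hsub : T.edgeFinset ⊆ G.edgeFinset := SimpleGraph.edgeFinset_subset_edgeFinset.2 hle
    have himg : Set.image c G.edgeSet
        = ((insert 0 ((G.edgeFinset \ T.edgeFinset).image c) : Finset ℕ) : Set ℕ) := by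
      ext k
      simp only [Set.mem_image, Finset.coe_insert, Finset.coe_image, Set.mem_insert_iff,
        Finset.mem_coe, Finset.mem_sdiff, SimpleGraph.mem_edgeFinset]
      constructor
      · rintro ⟨e, he, rfl⟩
        by_cases heT : e ∈ T.edgeSet
        · left; simp [c, heT]
        · exact Or.inr ⟨e, ⟨he, heT⟩, rfl⟩
      · rintro (rfl | ⟨e, he, rfl⟩)
        · have hpos : 0 < T.edgeFinset.card := by omega
          obtain ⟨e, he⟩ := Finset.card_pos.1 hpos
          refine ⟨e, SimpleGraph.mem_edgeFinset.1 (hsub he), ?_⟩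
          simp only [c, if_pos (SimpleGraph.mem_edgeFinset.1 he)]
        · exact ⟨e, he.1, rfl⟩
    have hcv : ∀ e ∈ G.edgeFinset \ T.edgeFinset, c e = (f e : ℕ) + 1 := by
      intro e he
      have := (Finset.mem_sdiff.1 he).2
      rw [SimpleGraph.mem_edgeFinset] at this
      simp only [c, if_neg this]
    rw [himg, Set.ncard_coe_finset, Finset.card_insert_of_notMem, Finset.card_image_of_injOn,
      Finset.card_sdiff_of_subset hsub]
    · have := Finset.card_le_card hsub
      omega
    · intro a ha b hb hab
      rw [hcv a ha, hcv b hb] at hab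
      exact f.injective (Fin.ext (by omega))
    · intro h0
      obtain ⟨e, he, h0⟩ := Finset.mem_image.1 h0
      rw [hcv e he] at h0
      omega

/-- If `G` is a connected graph with `n > 3` vertices having a cut vertex
(a vertex whose deletion disconnects `G`), then `mc(G) = m - n + 2`. -/
theorem mc_eq_of_cut_vertex {V : Type*} [Fintype V] [DecidableEq V]
    (G : SimpleGraph V) [DecidableRel G.Adj] (hG : G.Connected)
    (hn : 3 < Fintype.card V)
    (hv : ∃ v : V, ¬ (G.induce ({v} : Set V)ᶜ).Connected) :
    (mcNum G : ℤ) = (G.edgeFinset.card : ℤ) - (Fintype.card V : ℤ) + 2 := by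
  obtain ⟨v, hv⟩ := hv
  obtain ⟨c, hc, hcc⟩ := aux_lower G hG hn
  have hgr : IsGreatest {k | ∃ c : Sym2 V → ℕ, IsMCColoring G c ∧
      (Set.image c G.edgeSet).ncard = k} (Set.image c G.edgeSet).ncard := by
    refine ⟨⟨c, hc, rfl⟩, ?_⟩
    rintro k ⟨c', hc', rfl⟩
    have := aux_upper G hn v hv c' hc'
    omega
  have hmc : mcNum G = (Set.image c G.edgeSet).ncard := hgr.csSup_eq
  rw [hmc]
  omega
end
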